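/- arXiv:2011.09909 — 15 statements merged into one kernel-verified Lean document; each statement's English description precedes it below -/
import Mathlib

section
/- Let C be a 2D elasticity tensor. Then its harmonic part H(C) is a 2D harmonic fourth-order tensor, i.e. H(C) is invariant under all permutations of its four indices and satisfies Σₖ H(C) k k i j = 0 for all i, j. Consequently C admits the harmonic decomposition C i j k l = 2μ(C)·J i j k l + κ(C)·δ i j · δ k l + ½(δ i j · d'(C) k l + d'(C) i j · δ k l) + H(C) i j k l. -/
open Finset

noncomputable section

/-- A fourth-order tensor on `ℝ²`. -/
abbrev Tens4 := Fin 2 → Fin 2 → Fin 2 → Fin 2 → ℝ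

/-- Kronecker delta on `Fin 2`. -/
def kdelta (i j : Fin 2) : ℝ := if i = j then 1 else 0

/-- The isotropic fourth-order tensor `J`. -/
def Jten (i j k l : Fin 2) : ℝ :=
  (kdelta i k * kdelta j l + kdelta i l * kdelta j k) / 2 - kdelta i j * kdelta k l / 2

/-- A 2D elasticity tensor: minor and major index symmetries. -/
def IsElas (C : Tens4) : Prop :=
  (∀ i j k l, C i j k l = C j i k l) ∧ (∀ i j k l, C i j k l = C i j l k) ∧
    (∀ i j k l, C i j k l = C k l i j)

/-- Dilatation tensor `d(C)ᵢⱼ = Σₖ C k k i j`. -/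
def dil (C : Tens4) (i j : Fin 2) : ℝ := ∑ k, C k k i j

/-- Voigt tensor `v(C)ᵢⱼ = Σₖ C k i k j`. -/
def voigt (C : Tens4) (i j : Fin 2) : ℝ := ∑ k, C k i k j

/-- Shear modulus `μ(C)`. -/
def muC (C : Tens4) : ℝ := (2 * ∑ i, voigt C i i - ∑ i, dil C i i) / 8

/-- 2D bulk modulus `κ(C)`. -/
def kappaC (C : Tens4) : ℝ := (∑ i, dil C i i) / 4

/-- Deviatoric part `d'(C)` of the dilatation tensor. -/
def devC (C : Tens4) (i j : Fin 2) : ℝ := dil C i j - (∑ k, dil C k k) / 2 * kdelta i j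

/-- Harmonic (fourth-order) part `H(C)` of the elasticity tensor. -/
def harmC (C : Tens4) (i j k l : Fin 2) : ℝ :=
  C i j k l - 2 * muC C * Jten i j k l - kappaC C * kdelta i j * kdelta k l
    - (kdelta i j * devC C k l + devC C i j * kdelta k l) / 2

/-- A 2D harmonic fourth-order tensor: totally symmetric (invariant under all
permutations of its four indices) and traceless. -/
def IsHarmonic (H : Tens4) : Prop :=
  (∀ (σ : Equiv.Perm (Fin 4)) (v : Fin 4 → Fin 2),
      H (v (σ 0)) (v (σ 1)) (v (σ 2)) (v (σ 3)) = H (v 0) (v 1) (v 2) (v 3)) ∧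
    (∀ i j : Fin 2, ∑ k, H k k i j = 0)

/-- The value of `H(C)` at an index tuple depends only on the number of indices equal to `1`. -/
theorem harmC_eq_count (C : Tens4) (hC : IsElas C) (i j k l : Fin 2) :
    harmC C i j k l =
      (fun n : ℕ => if n = 0 then harmC C 0 0 0 0 else if n = 1 then harmC C 0 0 0 1
        else if n = 2 then harmC C 0 0 1 1 else if n = 3 then harmC C 0 1 1 1
        else harmC C 1 1 1 1) (i.val + j.val + k.val + l.val) := by
  obtain ⟨h1, h2, h3⟩ := hC
  have a1 := h1 1 0
  have a2 := fun i j => h2 i j 1 0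
  have b1 := h3 0 1 0 0
  have b2 := h3 1 1 0 0
  have b3 := h3 1 1 0 1
  fin_cases i <;> fin_cases j <;> fin_cases k <;> fin_cases l <;>
    simp [harmC, Jten, muC, kappaC, devC, dil, voigt, kdelta, Fin.sum_univ_two, a1, a2, b1, b2, b3]
      <;> ring

/-- The harmonic part `H(C)` of a 2D elasticity tensor is a 2D
harmonic fourth-order tensor, and `C` admits the harmonic decomposition
`C = 2μJ + κ δ⊗δ + ½(δ⊗d' + d'⊗δ) + H`. -/
theorem harmonic_part_isHarmonic_and_decomposition (C : Tens4) (hC : IsElas C) :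
    IsHarmonic (harmC C) ∧
      ∀ i j k l, C i j k l =
        2 * muC C * Jten i j k l + kappaC C * kdelta i j * kdelta k l
          + (kdelta i j * devC C k l + devC C i j * kdelta k l) / 2
          + harmC C i j k l := by
  refine ⟨⟨fun σ v => ?_, fun i j => ?_⟩, fun i j k l => ?_⟩
  · rw [harmC_eq_count C hC, harmC_eq_count C hC (v 0)]
    have h := Equiv.sum_comp σ (fun a => (v a).val)
    simp only [Fin.sum_univ_four] at h
    rw [h]
  · obtain ⟨h1, h2, h3⟩ := hC
    have a1 := h1 1 0
    have a2 := fun i j => h2 i j 1 0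
    have b1 := h3 0 1 0 0
    have b2 := h3 1 1 0 0
    have b3 := h3 1 1 0 1
    fin_cases i <;> fin_cases j <;>
      simp [harmC, Jten, muC, kappaC, devC, dil, voigt, kdelta, Fin.sum_univ_two,
        a1, a2, b1, b2, b3] <;> ring
  · unfold harmC
    ring
end
end

section
/- Let C be a 2D elasticity tensor. Then in dimension 2 the deviatoric parts of the dilatation and Voigt tensors coincide: d(C) − ½(tr d(C))·δ = v(C) − ½(tr v(C))·δ. Moreover, for d' = d(C) − ½(tr d(C))·δ one has the fourth-order tensor identity δ i j · d' k l + d' i j · δ k l = ½(δ i k · d' j l + δ i l · d' j k + d' i k · δ j l + d' i l · δ j k) for all indices i, j, k, l. -/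
open Finset

noncomputable section

/-- In 2D, the deviatoric parts of the dilatation and Voigt tensors
coincide, and `δ ⊗ d' + d' ⊗ δ = δ ⊗̄ d' + d' ⊗̄ δ` for the deviator `d' = d'(C)`. -/
theorem dev_dil_eq_dev_voigt_and_bar_product (C : Tens4) (hC : IsElas C) :
    (∀ i j, dil C i j - (∑ k, dil C k k) / 2 * kdelta i j
        = voigt C i j - (∑ k, voigt C k k) / 2 * kdelta i j) ∧
      (∀ i j k l, kdelta i j * devC C k l + devC C i j * kdelta k l
        = (kdelta i k * devC C j l + kdelta i l * devC C j k
            + devC C i k * kdelta j l + devC C i l * kdelta j k) / 2) := by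
  obtain ⟨h1, h2, h3⟩ := hC
  have a1 := h1 0 1 0 0
  have a2 := h1 0 1 0 1
  have a3 := h1 0 1 1 0
  have a4 := h1 0 1 1 1
  have b1 := h2 0 0 0 1
  have b2 := h2 0 1 0 1
  have b3 := h2 1 0 0 1
  have b4 := h2 1 1 0 1
  have c1 := h3 0 0 1 1
  have c2 := h3 0 0 0 1
  have c3 := h3 0 1 1 1
  have c4 := h3 0 0 1 0
  have c5 := h3 1 0 1 1
  constructor
  · intro i j
    fin_cases i <;> fin_cases j <;>
      simp [dil, voigt, kdelta, Fin.sum_univ_two] <;> linarith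
  · intro i j k l
    fin_cases i <;> fin_cases j <;> fin_cases k <;> fin_cases l <;>
      simp [devC, dil, kdelta, Fin.sum_univ_two] <;> linarith
end
end

section
/- For all real numbers a and b, the symmetric 3×3 real matrix [[a, −a, √2·b], [−a, a, −√2·b], [√2·b, −√2·b, −2a]] (the Kelvin representation of a 2D harmonic fourth-order tensor with H₁₁₁₁ = a and H₁₁₁₂ = b) has eigenvalues exactly 0, 2√(a² + b²) and −2√(a² + b²); in particular, when (a,b) ≠ (0,0) its nonzero eigenvalues are two opposite real numbers. -/
noncomputable section

/-- The Kelvin matrix of a 2D harmonic fourth-order tensor with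
components `H₁₁₁₁ = a`, `H₁₁₁₂ = b` has eigenvalues exactly `0`,
`2√(a²+b²)` and `-2√(a²+b²)`; when `(a,b) ≠ (0,0)` the two nonzero eigenvalues
are opposite nonzero reals. -/
theorem kelvin_harmonic_eigenvalues (a b : ℝ) :
    (∀ lam : ℝ,
      Matrix.det
          ((!![a, -a, Real.sqrt 2 * b;
              -a, a, -(Real.sqrt 2 * b);
              Real.sqrt 2 * b, -(Real.sqrt 2 * b), -2 * a] :
            Matrix (Fin 3) (Fin 3) ℝ) - lam • (1 : Matrix (Fin 3) (Fin 3) ℝ)) = 0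
        ↔ lam = 0 ∨ lam = 2 * Real.sqrt (a ^ 2 + b ^ 2)
            ∨ lam = -(2 * Real.sqrt (a ^ 2 + b ^ 2))) ∧
      ((a, b) ≠ (0, 0) → 2 * Real.sqrt (a ^ 2 + b ^ 2) ≠ 0) := by
  have h2 : Real.sqrt 2 ^ 2 = 2 := Real.sq_sqrt (by norm_num)
  have hr : Real.sqrt (a ^ 2 + b ^ 2) ^ 2 = a ^ 2 + b ^ 2 := Real.sq_sqrt (by positivity)
  refine ⟨fun lam => ?_, fun hab h => ?_⟩
  · generalize Real.sqrt (a ^ 2 + b ^ 2) = r at hr ⊢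
    generalize Real.sqrt 2 = s at h2 ⊢
    have key : Matrix.det
          ((!![a, -a, s * b;
              -a, a, -(s * b);
              s * b, -(s * b), -2 * a] :
            Matrix (Fin 3) (Fin 3) ℝ) - lam • (1 : Matrix (Fin 3) (Fin 3) ℝ))
        = -(lam * ((lam - 2 * r) * (lam + 2 * r))) := by
      simp [Matrix.det_fin_three, Matrix.one_apply]
      linear_combination (2 * lam * b ^ 2) * h2 - 4 * lam * hr
    rw [key, neg_eq_zero, mul_eq_zero, mul_eq_zero, sub_eq_zero, add_eq_zero_iff_eq_neg]
  · apply hab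
    have h0 : Real.sqrt (a ^ 2 + b ^ 2) = 0 := by linarith
    rw [h0] at hr
    have ha : a = 0 := by nlinarith [sq_nonneg a, sq_nonneg b]
    have hb : b = 0 := by nlinarith [sq_nonneg a, sq_nonneg b]
    rw [ha, hb]
end
end

section
/- Let H be a 2D harmonic fourth-order tensor, let e be a symmetric traceless 2×2 real matrix with Σᵢⱼ (e i j)² = 1, and suppose Σₖₗ H i j k l · e k l = Λ·e i j for all i, j, where Λ ≠ 0. Then H i j k l = 2Λ·(e i j · e k l − ½·J i j k l) for all indices, where J i j k l = ½(δ i k · δ j l + δ i l · δ j k) − ½ δ i j · δ k l. -/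
open Finset

noncomputable section

/-- If a unit symmetric traceless `2×2` matrix `e` is an eigentensor
of a 2D harmonic fourth-order tensor `H` with nonzero eigenvalue `Λ`, then
`H = 2Λ (e ⊗ e − ½ J)`. -/
theorem harmonic_eq_of_eigentensor (H : Tens4) (hH : IsHarmonic H)
    (e : Matrix (Fin 2) (Fin 2) ℝ) (hsym : ∀ i j, e i j = e j i)
    (htr : e 0 0 + e 1 1 = 0) (hnorm : ∑ i, ∑ j, (e i j) ^ 2 = 1)
    (lam : ℝ) (hlam : lam ≠ 0)
    (heig : ∀ i j, (∑ k, ∑ l, H i j k l * e k l) = lam * e i j) :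
    ∀ i j k l, H i j k l = 2 * lam * (e i j * e k l - Jten i j k l / 2) := by
  obtain ⟨hs, ht⟩ := hH
  have s1 : ∀ i j k l, H j i k l = H i j k l := fun i j k l => by
    exact hs (Equiv.swap 0 1) ![i, j, k, l]
  have s2 : ∀ i j k l, H i k j l = H i j k l := fun i j k l => by
    exact hs (Equiv.swap 1 2) ![i, j, k, l]
  have s3 : ∀ i j k l, H i j l k = H i j k l := fun i j k l => by
    exact hs (Equiv.swap 2 3) ![i, j, k, l]
  simp only [Fin.sum_univ_two] at ht hnorm heig
  have t00 := ht 0 0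
  have t01 := ht 0 1
  have t11 := ht 1 1
  have e00 := heig 0 0
  have e01 := heig 0 1
  have hb := hsym 1 0
  have hd : e 1 1 = - e 0 0 := by linarith
  -- all components reduce to `H 0 0 0 0` and `H 0 0 0 1`
  have h0010 : H 0 0 1 0 = H 0 0 0 1 := s3 0 0 0 1
  have h0100 : H 0 1 0 0 = H 0 0 0 1 := (s2 0 0 1 0).trans h0010
  have h1000 : H 1 0 0 0 = H 0 0 0 1 := (s1 0 1 0 0).trans h0100
  have h1100 : H 1 1 0 0 = - H 0 0 0 0 := by linarith
  have h1010 : H 1 0 1 0 = - H 0 0 0 0 := (s2 1 1 0 0).trans h1100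
  have h1001 : H 1 0 0 1 = - H 0 0 0 0 := (s3 1 0 1 0).trans h1010
  have h0110 : H 0 1 1 0 = - H 0 0 0 0 := (s1 1 0 1 0).trans h1010
  have h0101 : H 0 1 0 1 = - H 0 0 0 0 := (s1 1 0 0 1).trans h1001
  have h0011 : H 0 0 1 1 = - H 0 0 0 0 := (s2 0 1 0 1).trans h0101
  have h1101 : H 1 1 0 1 = - H 0 0 0 1 := by linarith
  have h1110 : H 1 1 1 0 = - H 0 0 0 1 := (s3 1 1 0 1).trans h1101
  have h1011 : H 1 0 1 1 = - H 0 0 0 1 := (s2 1 1 0 1).trans h1101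
  have h0111 : H 0 1 1 1 = - H 0 0 0 1 := (s1 1 0 1 1).trans h1011
  have h1111 : H 1 1 1 1 = H 0 0 0 0 := by linarith
  rw [h0010, h0011, hb, hd] at e00
  rw [h0100, h0101, h0110, h0111, hb, hd] at e01
  rw [hb, hd] at hnorm
  have hp : H 0 0 0 0 = lam * (e 0 0 ^ 2 - e 0 1 ^ 2) := by
    linear_combination e 0 0 * e00 - e 0 1 * e01 - H 0 0 0 0 * hnorm
  have hq : H 0 0 0 1 = 2 * lam * (e 0 0 * e 0 1) := by
    linear_combination e 0 1 * e00 + e 0 0 * e01 - H 0 0 0 1 * hnorm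
  intro i j k l
  fin_cases i <;> fin_cases j <;> fin_cases k <;> fin_cases l <;>
    simp only [Fin.zero_eta, Fin.mk_one, h0010, h0100, h1000, h1100, h1010, h1001, h0110, h0101,
      h0011, h1101, h1110, h1011, h0111, h1111, hb, hd, hp, hq, Jten, kdelta, if_true,
      zero_ne_one, one_ne_zero, if_false] <;>
    first
    | ring1
    | linear_combination (lam / 2) * hnorm
    | linear_combination (-lam / 2) * hnorm
end
end

section
/- Every 2D harmonic fourth-order tensor H is a harmonic square: there exists a symmetric traceless 2×2 real matrix h such that H i j k l = h i j · h k l − ½(Σₚq (h p q)²)·J i j k l for all indices. Moreover H is also the opposite of a harmonic square: there exists a symmetric traceless 2×2 real matrix k with H i j k l = −(k i j · k k l − ½(Σₚq (k p q)²)·J i j k l). -/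
open Finset

noncomputable section

/-- A symmetric traceless (deviatoric) `2×2` real matrix. -/
def IsDev (h : Matrix (Fin 2) (Fin 2) ℝ) : Prop :=
  (∀ i j, h i j = h j i) ∧ h 0 0 + h 1 1 = 0

/-- The harmonic square `h ∗ h` of a symmetric traceless `2×2` matrix `h`. -/
def hsq (h : Matrix (Fin 2) (Fin 2) ℝ) (i j k l : Fin 2) : ℝ :=
  h i j * h k l - (∑ p, ∑ q, (h p q) ^ 2) / 2 * Jten i j k l

/-- Square roots of complex numbers, in real coordinates. -/
theorem exists_real_sq (x y : ℝ) : ∃ a b : ℝ, a ^ 2 - b ^ 2 = x ∧ 2 * a * b = y := by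
  obtain ⟨z, hz⟩ := IsAlgClosed.exists_pow_nat_eq (⟨x, y⟩ : ℂ) (n := 2) (by norm_num)
  have h1 := congrArg Complex.re hz
  have h2 := congrArg Complex.im hz
  simp only [pow_two, Complex.mul_re, Complex.mul_im] at h1 h2
  exact ⟨z.re, z.im, by linarith, by linarith⟩

/-- The components of a harmonic tensor in terms of two of them. -/
theorem harmonic_components (H : Tens4) (hH : IsHarmonic H) (a b s : ℝ)
    (h1 : a ^ 2 - b ^ 2 = 2 * s * H 0 0 0 0) (h2 : 2 * a * b = 2 * s * H 0 0 0 1) :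
    ∀ i j k l, s * H i j k l = hsq !![a, b; b, -a] i j k l := by
  obtain ⟨hs, ht⟩ := hH
  have s1 : ∀ i j k l, H j i k l = H i j k l := fun i j k l => by
    have h := hs (Equiv.swap 0 1) ![i, j, k, l]
    simpa [Equiv.swap_apply_def] using h
  have s2 : ∀ i j k l, H i k j l = H i j k l := fun i j k l => by
    have h := hs (Equiv.swap 1 2) ![i, j, k, l]
    simpa [Equiv.swap_apply_def] using h
  have s3 : ∀ i j k l, H i j l k = H i j k l := fun i j k l => by
    have h := hs (Equiv.swap 2 3) ![i, j, k, l]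
    simpa [Equiv.swap_apply_def] using h
  have t00 := ht 0 0
  have t01 := ht 0 1
  have t11 := ht 1 1
  simp only [Fin.sum_univ_two] at t00 t01 t11
  have e1 : H 0 0 1 0 = H 0 0 0 1 := s3 _ _ _ _
  have e2 : H 0 1 0 0 = H 0 0 1 0 := s2 _ _ _ _
  have e3 : H 1 0 0 0 = H 0 1 0 0 := s1 _ _ _ _
  have f1 : H 0 1 0 1 = H 0 0 1 1 := s2 _ _ _ _
  have f2 : H 1 0 0 1 = H 0 1 0 1 := s1 _ _ _ _
  have f3 : H 0 1 1 0 = H 0 1 0 1 := s3 _ _ _ _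
  have f4 : H 1 0 1 0 = H 0 1 1 0 := s1 _ _ _ _
  have f5 : H 1 1 0 0 = H 1 0 1 0 := s2 _ _ _ _
  have g1 : H 1 1 1 0 = H 1 1 0 1 := s3 _ _ _ _
  have g2 : H 1 0 1 1 = H 1 1 0 1 := s2 _ _ _ _
  have g3 : H 0 1 1 1 = H 1 0 1 1 := s1 _ _ _ _
  have x2 : H 0 0 1 1 = - H 0 0 0 0 := by linarith
  have x3 : H 1 1 0 1 = - H 0 0 0 1 := by linarith
  have x4 : H 1 1 1 1 = H 0 0 0 0 := by linarith
  rw [Fin.forall_fin_two]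
  simp only [Fin.forall_fin_two, hsq, Jten, kdelta, Fin.sum_univ_two, Matrix.of_apply,
    Matrix.cons_val_zero, Matrix.cons_val_one, g3, g2, g1, f5, f4, f3, f2, f1, e3, e2, e1,
    x2, x3, x4]
  norm_num
  refine ⟨?_, ?_⟩ <;> refine ⟨⟨⟨?_, ?_⟩, ?_, ?_⟩, ⟨?_, ?_⟩, ?_, ?_⟩ <;> linarith

/-- Every 2D harmonic fourth-order tensor is a harmonic square
`h ∗ h`, and also the opposite of a harmonic square `-(k ∗ k)`. -/
theorem harmonic_is_harmonic_square (H : Tens4) (hH : IsHarmonic H) :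
    (∃ h : Matrix (Fin 2) (Fin 2) ℝ, IsDev h ∧
        ∀ i j k l, H i j k l = hsq h i j k l) ∧
      (∃ k : Matrix (Fin 2) (Fin 2) ℝ, IsDev k ∧
        ∀ i j k' l, H i j k' l = -(hsq k i j k' l)) := by
  have hdev : ∀ a b : ℝ, IsDev !![a, b; b, -a] := fun a b => by
    simp [IsDev, Fin.forall_fin_two]
  constructor
  · obtain ⟨a, b, h1, h2⟩ := exists_real_sq (2 * 1 * H 0 0 0 0) (2 * 1 * H 0 0 0 1)
    refine ⟨_, hdev a b, fun i j k l => ?_⟩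
    have h := harmonic_components H hH a b 1 h1 h2 i j k l
    linarith
  · obtain ⟨a, b, h1, h2⟩ := exists_real_sq (2 * (-1) * H 0 0 0 0) (2 * (-1) * H 0 0 0 1)
    refine ⟨_, hdev a b, fun i j k l => ?_⟩
    have h := harmonic_components H hH a b (-1) h1 h2 i j k l
    linarith
end
end

section
/- Let H be a nonzero 2D harmonic fourth-order tensor. Then the equation H = h∗h, i.e. H i j k l = h i j · h k l − ½(Σₚq (h p q)²)·J i j k l for all indices, has exactly two solutions h among symmetric traceless 2×2 real matrices, and these two solutions are opposite to each other: if h₁ and h₂ are both solutions then h₂ = h₁ or h₂ = −h₁. -/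
open Finset

noncomputable section

theorem swap_facts (H : Tens4) (hH : IsHarmonic H) :
    (∀ i j k l, H j i k l = H i j k l) ∧ (∀ i j k l, H i k j l = H i j k l) ∧
      (∀ i j k l, H i j l k = H i j k l) := by
  refine ⟨fun i j k l => ?_, fun i j k l => ?_, fun i j k l => ?_⟩
  · exact hH.1 (Equiv.swap 0 1) ![i, j, k, l]
  · exact hH.1 (Equiv.swap 1 2) ![i, j, k, l]
  · exact hH.1 (Equiv.swap 2 3) ![i, j, k, l]

theorem comps (H : Tens4) (hH : IsHarmonic H) :
    H 0 0 1 0 = H 0 0 0 1 ∧ H 0 1 0 0 = H 0 0 0 1 ∧ H 1 0 0 0 = H 0 0 0 1 ∧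
    H 0 0 1 1 = - H 0 0 0 0 ∧ H 0 1 0 1 = - H 0 0 0 0 ∧ H 0 1 1 0 = - H 0 0 0 0 ∧
    H 1 0 0 1 = - H 0 0 0 0 ∧ H 1 0 1 0 = - H 0 0 0 0 ∧ H 1 1 0 0 = - H 0 0 0 0 ∧
    H 0 1 1 1 = - H 0 0 0 1 ∧ H 1 0 1 1 = - H 0 0 0 1 ∧ H 1 1 0 1 = - H 0 0 0 1 ∧
    H 1 1 1 0 = - H 0 0 0 1 ∧ H 1 1 1 1 = H 0 0 0 0 := by
  obtain ⟨s1, s2, s3⟩ := swap_facts H hH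
  have t := hH.2
  simp only [Fin.sum_univ_two] at t
  have a1 := s3 0 0 0 1
  have a2 := s2 0 0 1 0
  have a3 := s1 0 1 0 0
  have b1 := s2 0 0 1 1
  have b2 := s3 0 1 0 1
  have b3 := s1 0 1 0 1
  have b4 := s1 0 1 1 0
  have b5 := s2 1 0 1 0
  have c1 := s1 0 1 1 1
  have c2 := s2 1 0 1 1
  have c3 := s3 1 1 0 1
  have t1 := t 0 0
  have t2 := t 0 1
  have t3 := t 1 1
  refine ⟨?_, ?_, ?_, ?_, ?_, ?_, ?_, ?_, ?_, ?_, ?_, ?_, ?_, ?_⟩ <;> linarith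

theorem sol_iff (H : Tens4) (hH : IsHarmonic H) (h : Matrix (Fin 2) (Fin 2) ℝ)
    (hd : IsDev h) :
    (∀ i j k l, H i j k l = hsq h i j k l) ↔
      (2 * H 0 0 0 0 = h 0 0 ^ 2 - h 0 1 ^ 2 ∧ H 0 0 0 1 = h 0 0 * h 0 1) := by
  have e1 : h 1 0 = h 0 1 := hd.1 1 0
  have e2 : h 1 1 = - h 0 0 := by linarith [hd.2]
  obtain ⟨c1, c2, c3, c4, c5, c6, c7, c8, c9, c10, c11, c12, c13, c14⟩ := comps H hH
  constructor
  · intro hs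
    have p := hs 0 0 0 0
    have q := hs 0 0 0 1
    simp [hsq, Jten, kdelta, Fin.sum_univ_two, e1, e2] at p q
    exact ⟨by linarith, by linarith⟩
  · rintro ⟨p, q⟩
    simp only [Fin.forall_fin_two, c1, c2, c3, c4, c5, c6, c7, c8, c9, c10, c11, c12, c13, c14]
    simp [hsq, Jten, kdelta, Fin.sum_univ_two, e1, e2]
    refine ⟨⟨⟨⟨?_, ?_⟩, ?_, ?_⟩, ⟨?_, ?_⟩, ?_, ?_⟩, ⟨⟨?_, ?_⟩, ?_, ?_⟩, ⟨?_, ?_⟩, ?_, ?_⟩ <;>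
      linarith

/-- For a nonzero 2D harmonic fourth-order tensor `H`, the equation
`H = h ∗ h` has exactly two solutions among symmetric traceless `2×2` matrices,
and they are opposite to each other. -/
theorem harmonic_square_root_two_opposite_solutions (H : Tens4) (hH : IsHarmonic H)
    (hne : H ≠ 0) :
    ∃ h₁ : Matrix (Fin 2) (Fin 2) ℝ,
      (IsDev h₁ ∧ ∀ i j k l, H i j k l = hsq h₁ i j k l) ∧
      (IsDev (-h₁) ∧ ∀ i j k l, H i j k l = hsq (-h₁) i j k l) ∧
      h₁ ≠ -h₁ ∧
      ∀ h : Matrix (Fin 2) (Fin 2) ℝ,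
        (IsDev h ∧ ∀ i j k l, H i j k l = hsq h i j k l) → h = h₁ ∨ h = -h₁ := by
  obtain ⟨z, hz⟩ := IsAlgClosed.exists_pow_nat_eq
    (⟨2 * H 0 0 0 0, 2 * H 0 0 0 1⟩ : ℂ) (n := 2) (by norm_num)
  have hre := congrArg Complex.re hz
  have him := congrArg Complex.im hz
  simp only [pow_two, Complex.mul_re, Complex.mul_im] at hre him
  obtain ⟨a, b⟩ := z
  simp only at hre him
  have hd : IsDev !![a, b; b, -a] := by
    refine ⟨?_, by simp⟩
    simp [Fin.forall_fin_two]
  have hd' : IsDev (-!![a, b; b, -a]) := by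
    refine ⟨?_, by simp⟩
    simp [Fin.forall_fin_two]
  have hs := (sol_iff H hH _ hd).2 ⟨by simp; linarith, by simp; linarith⟩
  refine ⟨!![a, b; b, -a], ⟨hd, hs⟩,
    ⟨hd', (sol_iff H hH _ hd').2 ⟨by simp; linarith, by simp; linarith⟩⟩, ?_, ?_⟩
  · intro he
    apply hne
    have ha := congrFun (congrFun he 0) 0
    have hb := congrFun (congrFun he 0) 1
    simp at ha hb
    have ha : a = 0 := by linarith
    have hb : b = 0 := by linarith
    subst ha hb
    funext i j k l
    rw [hs]
    fin_cases i <;> fin_cases j <;> simp [hsq, Fin.sum_univ_two]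
  · rintro h ⟨hhd, hh⟩
    obtain ⟨p, q⟩ := (sol_iff H hH h hhd).1 hh
    have e1 : h 1 0 = h 0 1 := hhd.1 1 0
    have e2 : h 1 1 = - h 0 0 := by linarith [hhd.2]
    have hc : (⟨h 0 0, h 0 1⟩ : ℂ) ^ 2 = (⟨a, b⟩ : ℂ) ^ 2 := by
      rw [hz, pow_two]
      apply Complex.ext
      · simp only [Complex.mul_re]; linarith
      · simp only [Complex.mul_im]; linarith
    rcases sq_eq_sq_iff_eq_or_eq_neg.1 hc with hc | hc
    · left
      have r := congrArg Complex.re hc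
      have s := congrArg Complex.im hc
      simp only at r s
      ext i j
      fin_cases i <;> fin_cases j <;> simp [e1, e2, r, s]
    · right
      have r := congrArg Complex.re hc
      have s := congrArg Complex.im hc
      simp only [Complex.neg_re, Complex.neg_im] at r s
      ext i j
      fin_cases i <;> fin_cases j <;> simp [e1, e2, r, s]
end
end

section
/- Let h be a symmetric traceless 2×2 real matrix. Then the totally symmetric part of h⊗h corrected by its isotropic trace part equals the harmonic square: for all indices i, j, k, l, (h⊙h) i j k l − ¼(Σₚq (h p q)²)·(δ⊙δ) i j k l = h i j · h k l − ½(Σₚq (h p q)²)·J i j k l, where (h⊙h) and (δ⊙δ) denote the total symmetrizations (averages over all 24 index permutations) of the fourth-order tensors h i j · h k l and δ i j · δ k l respectively. -/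
open Finset

noncomputable section

/-- Total symmetrization of a fourth-order tensor: the average over all 24
permutations of the four indices. -/
def sym4 (T : Tens4) (i j k l : Fin 2) : ℝ :=
  (∑ σ : Equiv.Perm (Fin 4),
    T (![i, j, k, l] (σ 0)) (![i, j, k, l] (σ 1)) (![i, j, k, l] (σ 2))
      (![i, j, k, l] (σ 3))) / 24

/-- The symmetrization of `g ⊗ g` for a symmetric `g` reduces to the three pairings. -/
theorem sym4_pair (g : Fin 2 → Fin 2 → ℝ) (hg : ∀ i j, g i j = g j i) (i j k l : Fin 2) :
    sym4 (fun i j k l => g i j * g k l) i j k l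
      = (g i j * g k l + g i k * g j l + g i l * g j k) / 3 := by
  unfold sym4
  simp only [← Equiv.sum_comp Equiv.Perm.decomposeFin.symm, Fintype.sum_prod_type,
    Fin.sum_univ_succ, Equiv.Perm.decomposeFin_symm_apply_zero]
  have a1 (p : Fin 4) (e : Equiv.Perm (Fin 3)) :
      Equiv.Perm.decomposeFin.symm (p, e) 1 = Equiv.swap 0 p (e 0).succ :=
    Equiv.Perm.decomposeFin_symm_apply_succ e p 0
  have a2 (p : Fin 4) (e : Equiv.Perm (Fin 3)) :
      Equiv.Perm.decomposeFin.symm (p, e) 2 = Equiv.swap 0 p (e 1).succ :=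
    Equiv.Perm.decomposeFin_symm_apply_succ e p 1
  have a3 (p : Fin 4) (e : Equiv.Perm (Fin 3)) :
      Equiv.Perm.decomposeFin.symm (p, e) 3 = Equiv.swap 0 p (e 2).succ :=
    Equiv.Perm.decomposeFin_symm_apply_succ e p 2
  have b1 (p : Fin 3) (e : Equiv.Perm (Fin 2)) :
      Equiv.Perm.decomposeFin.symm (p, e) 1 = Equiv.swap 0 p (e 0).succ :=
    Equiv.Perm.decomposeFin_symm_apply_succ e p 0
  have b2 (p : Fin 3) (e : Equiv.Perm (Fin 2)) :
      Equiv.Perm.decomposeFin.symm (p, e) 2 = Equiv.swap 0 p (e 1).succ :=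
    Equiv.Perm.decomposeFin_symm_apply_succ e p 1
  have c1 (p : Fin 2) (e : Equiv.Perm (Fin 1)) :
      Equiv.Perm.decomposeFin.symm (p, e) 1 = Equiv.swap 0 p (e 0).succ :=
    Equiv.Perm.decomposeFin_symm_apply_succ e p 0
  simp [a1, a2, a3, b1, b2, c1, Equiv.swap_apply_def, Fin.ext_iff]
  rw [hg j i, hg k i, hg l i, hg k j, hg l j, hg l k]
  ring

/-- For a symmetric traceless `2×2` matrix `h`,
`(h ⊙ h) − ¼‖h‖² (δ ⊙ δ) = h ⊗ h − ½‖h‖² J` (the harmonic square). -/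
theorem sym_square_minus_trace_part_eq_harmonic_square
    (h : Matrix (Fin 2) (Fin 2) ℝ) (hd : IsDev h) :
    ∀ i j k l,
      sym4 (fun i j k l => h i j * h k l) i j k l
          - (∑ p, ∑ q, (h p q) ^ 2) / 4
            * sym4 (fun i j k l => kdelta i j * kdelta k l) i j k l
        = h i j * h k l - (∑ p, ∑ q, (h p q) ^ 2) / 2 * Jten i j k l := by
  obtain ⟨hs, ht⟩ := hd
  have hk : ∀ i j, kdelta i j = kdelta j i := fun i j => by simp [kdelta, eq_comm]
  have h1 : h 1 1 = - h 0 0 := by linarith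
  have h2 : h 1 0 = h 0 1 := hs 1 0
  intro i j k l
  rw [sym4_pair h hs, sym4_pair kdelta hk]
  fin_cases i <;> fin_cases j <;> fin_cases k <;> fin_cases l <;>
    simp [Jten, kdelta, Fin.sum_univ_two, h1, h2] <;> ring
end
end

section
/- Let h₁ = [[a₁, b₁], [b₁, −a₁]] and h₂ = [[a₂, b₂], [b₂, −a₂]] be symmetric traceless 2×2 real matrices. Then their harmonic product h₁∗h₂, defined as the fourth-order tensor (h₁⊙h₂) i j k l − ¼(Σₚq h₁ p q · h₂ p q)·(δ⊙δ) i j k l (where ⊙ denotes total symmetrization), is a 2D harmonic fourth-order tensor whose two determining components are (h₁∗h₂) 1 1 1 1 = ½(a₁·a₂ − b₁·b₂) and (h₁∗h₂) 1 1 1 2 = ½(a₁·b₂ + a₂·b₁); equivalently, (h₁∗h₂) 1 1 1 1 + i·(h₁∗h₂) 1 1 1 2 = ½(a₁ + i·b₁)(a₂ + i·b₂) in ℂ, so harmonic product corresponds to complex multiplication. -/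
open Finset

noncomputable section

theorem sym4_apply (T : Tens4) (v : Fin 4 → Fin 2) :
    sym4 T (v 0) (v 1) (v 2) (v 3) =
      (∑ σ : Equiv.Perm (Fin 4), T (v (σ 0)) (v (σ 1)) (v (σ 2)) (v (σ 3))) / 24 := by
  have hv : ![v 0, v 1, v 2, v 3] = v := by
    ext i; fin_cases i <;> rfl
  simp only [sym4, hv]

theorem sym4_perm (T : Tens4) (σ : Equiv.Perm (Fin 4)) (v : Fin 4 → Fin 2) :
    sym4 T (v (σ 0)) (v (σ 1)) (v (σ 2)) (v (σ 3)) = sym4 T (v 0) (v 1) (v 2) (v 3) := by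
  rw [sym4_apply, sym4_apply T (fun i => v (σ i))]
  congr 1
  exact Equiv.sum_comp (Equiv.mulLeft σ)
    (fun τ : Equiv.Perm (Fin 4) => T (v (τ 0)) (v (τ 1)) (v (τ 2)) (v (τ 3)))

/-- Explicit form of the symmetrization of a product of two symmetric matrices. -/
theorem sym4_prod (f g : Fin 2 → Fin 2 → ℝ) (hf : ∀ i j, f i j = f j i)
    (hg : ∀ i j, g i j = g j i) (i j k l : Fin 2) :
    sym4 (fun i j k l => f i j * g k l) i j k l =
      (f i j * g k l + f k l * g i j + f i k * g j l + f j l * g i k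
        + f i l * g j k + f j k * g i l) / 6 := by
  have key : (Finset.univ : Finset (Equiv.Perm (Fin 4))).val.map
      (fun σ => (σ 0, σ 1, σ 2, σ 3)) =
      (((List.finRange 4).flatMap fun a => (List.finRange 4).flatMap fun b =>
        (List.finRange 4).flatMap fun c => (List.finRange 4).map fun d => (a, b, c, d)).filter
        fun p => [p.1, p.2.1, p.2.2.1, p.2.2.2].Nodup : List _) := by
    decide +kernel
  have key2 := congrArg (fun m => (m.map (fun p : Fin 4 × Fin 4 × Fin 4 × Fin 4 =>
    f (![i, j, k, l] p.1) (![i, j, k, l] p.2.1) *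
      g (![i, j, k, l] p.2.2.1) (![i, j, k, l] p.2.2.2))).sum) key
  simp only [Multiset.map_map] at key2
  have hs : (∑ σ : Equiv.Perm (Fin 4), f (![i, j, k, l] (σ 0)) (![i, j, k, l] (σ 1)) *
      g (![i, j, k, l] (σ 2)) (![i, j, k, l] (σ 3))) = _ := key2
  simp only [sym4]
  rw [hs]
  simp [List.finRange_succ]
  rw [hf j i, hf k i, hf l i, hf k j, hf l j, hf l k,
    hg j i, hg k i, hg l i, hg k j, hg l j, hg l k]
  ring

/-- The harmonic product of two symmetric traceless `2×2` matrices
is a 2D harmonic fourth-order tensor whose two determining components are given by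
complex multiplication: `(h₁∗h₂)₁₁₁₁ + i (h₁∗h₂)₁₁₁₂ = ½(a₁+ib₁)(a₂+ib₂)`. -/
theorem harmonic_product_is_complex_multiplication (a₁ b₁ a₂ b₂ : ℝ) :
    let h₁ : Matrix (Fin 2) (Fin 2) ℝ := !![a₁, b₁; b₁, -a₁]
    let h₂ : Matrix (Fin 2) (Fin 2) ℝ := !![a₂, b₂; b₂, -a₂]
    let P : Tens4 := fun i j k l =>
      sym4 (fun i j k l => h₁ i j * h₂ k l) i j k l
        - (∑ p, ∑ q, h₁ p q * h₂ p q) / 4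
          * sym4 (fun i j k l => kdelta i j * kdelta k l) i j k l
    IsHarmonic P ∧ P 0 0 0 0 = (a₁ * a₂ - b₁ * b₂) / 2 ∧
      P 0 0 0 1 = (a₁ * b₂ + a₂ * b₁) / 2 ∧
      (P 0 0 0 0 : ℂ) + Complex.I * (P 0 0 0 1 : ℂ)
        = (a₁ + Complex.I * b₁) * (a₂ + Complex.I * b₂) / 2 := by
  intro h₁ h₂ P
  have hh₁ : ∀ i j, h₁ i j = h₁ j i := by
    intro i j; fin_cases i <;> fin_cases j <;> rfl
  have hh₂ : ∀ i j, h₂ i j = h₂ j i := by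
    intro i j; fin_cases i <;> fin_cases j <;> rfl
  have hk : ∀ i j, kdelta i j = kdelta j i := by
    intro i j; simp only [kdelta, eq_comm]
  have hP : ∀ i j k l, P i j k l = _ := fun i j k l =>
    congrArg₂ (fun x y => x - (∑ p, ∑ q, h₁ p q * h₂ p q) / 4 * y)
      (sym4_prod h₁ h₂ hh₁ hh₂ i j k l) (sym4_prod kdelta kdelta hk hk i j k l)
  have e1 : P 0 0 0 0 = (a₁ * a₂ - b₁ * b₂) / 2 := by
    rw [hP]; simp [h₁, h₂, kdelta]; ring
  have e2 : P 0 0 0 1 = (a₁ * b₂ + a₂ * b₁) / 2 := by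
    rw [hP]; simp [h₁, h₂, kdelta]; ring
  refine ⟨⟨?_, ?_⟩, e1, e2, ?_⟩
  · intro σ v
    simp only [P, sym4_perm]
  · intro i j
    simp only [Fin.sum_univ_two, hP]
    fin_cases i <;> fin_cases j <;> simp [h₁, h₂, kdelta] <;> ring
  · rw [e1, e2]
    push_cast
    linear_combination (-(b₁ * b₂ : ℂ) / 2) * Complex.I_sq
end
end

section
/- Let H be a 2D harmonic fourth-order tensor with a = H 1 1 1 1 and b = H 1 1 1 2, and let θ ∈ ℝ. Then the rotated tensor g(θ)⋆H, where (g(θ)⋆H) i j k l = Σₚqrs g(θ) i p · g(θ) j q · g(θ) k r · g(θ) l s · H p q r s and g(θ) is the rotation matrix [[cos θ, −sin θ], [sin θ, cos θ]], is again a 2D harmonic fourth-order tensor, with determining components (g(θ)⋆H) 1 1 1 1 = a·cos(4θ) − b·sin(4θ) and (g(θ)⋆H) 1 1 1 2 = a·sin(4θ) + b·cos(4θ). -/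
open Finset

noncomputable section

/-- Rotation matrix of angle `θ`. -/
def rot (θ : ℝ) : Matrix (Fin 2) (Fin 2) ℝ :=
  !![Real.cos θ, -Real.sin θ; Real.sin θ, Real.cos θ]

/-- Action `g ⋆ C` of a `2×2` matrix `g` on a fourth-order tensor `C`. -/
def act (g : Matrix (Fin 2) (Fin 2) ℝ) (C : Tens4) (i j k l : Fin 2) : ℝ :=
  ∑ p, ∑ q, ∑ r, ∑ s, g i p * g j q * g k r * g l s * C p q r s

/-- `C` is orthotropic: in some rotated basis, the components `1112` and `1222` vanish. -/
def IsOrtho (C : Tens4) : Prop :=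
  ∃ θ : ℝ, act (rot θ) C 0 0 0 1 = 0 ∧ act (rot θ) C 0 1 1 1 = 0

/-- Values of a harmonic tensor in terms of its two determining components. -/
def harmVal (a b : ℝ) (n : ℕ) : ℝ :=
  if n = 0 then a else if n = 1 then b else if n = 2 then -a else if n = 3 then -b else a

theorem harmVal_of_isHarmonic (H : Tens4) (hH : IsHarmonic H) (i j k l : Fin 2) :
    H i j k l = harmVal (H 0 0 0 0) (H 0 0 0 1) (i.val + j.val + k.val + l.val) := by
  obtain ⟨hs, ht⟩ := hH
  have s1 : ∀ i j k l, H i j k l = H j i k l := fun i j k l => by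
    simpa [Equiv.swap_apply_def] using (hs (Equiv.swap 0 1) ![j, i, k, l])
  have s2 : ∀ i j k l, H i j k l = H i k j l := fun i j k l => by
    simpa [Equiv.swap_apply_def] using (hs (Equiv.swap 1 2) ![i, k, j, l])
  have s3 : ∀ i j k l, H i j k l = H i j l k := fun i j k l => by
    simpa [Equiv.swap_apply_def] using (hs (Equiv.swap 2 3) ![i, j, l, k])
  simp only [Fin.sum_univ_two] at ht
  have t00 := ht 0 0
  have t01 := ht 0 1
  have t11 := ht 1 1
  have e1 := s3 0 0 0 1
  have e2 := s2 0 0 1 0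
  have e3 := s1 0 1 0 0
  have f1 := s2 0 0 1 1
  have f2 := s3 0 1 0 1
  have f3 := s1 0 1 0 1
  have f4 := s1 0 1 1 0
  have f5 := s2 1 0 1 0
  have g1 := s1 0 1 1 1
  have g2 := s2 1 0 1 1
  have g3 := s3 1 1 0 1
  fin_cases i <;> fin_cases j <;> fin_cases k <;> fin_cases l <;>
    simp [harmVal] <;> linarith

theorem isHarmonic_of_harmVal (T : Tens4) (a b : ℝ)
    (h : ∀ i j k l : Fin 2, T i j k l = harmVal a b (i.val + j.val + k.val + l.val)) :
    IsHarmonic T := by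
  refine ⟨fun σ v => ?_, fun i j => ?_⟩
  · rw [h, h]
    have := Equiv.sum_comp σ (fun m => (v m).val)
    simp only [Fin.sum_univ_four] at this
    rw [this]
  · simp only [h, Fin.sum_univ_two]
    fin_cases i <;> fin_cases j <;> simp [harmVal]

theorem cos_four (θ : ℝ) : Real.cos (4 * θ) =
    Real.cos θ ^ 4 - 6 * Real.cos θ ^ 2 * Real.sin θ ^ 2 + Real.sin θ ^ 4 := by
  rw [show 4 * θ = 2 * (2 * θ) by ring, Real.cos_two_mul', Real.cos_two_mul', Real.sin_two_mul]
  ring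

theorem sin_four (θ : ℝ) : Real.sin (4 * θ) =
    4 * Real.cos θ ^ 3 * Real.sin θ - 4 * Real.cos θ * Real.sin θ ^ 3 := by
  rw [show 4 * θ = 2 * (2 * θ) by ring, Real.sin_two_mul, Real.cos_two_mul', Real.sin_two_mul]
  ring

theorem act_rot_harmVal (H : Tens4) (hH : IsHarmonic H) (θ : ℝ) (i j k l : Fin 2) :
    act (rot θ) H i j k l =
      harmVal (H 0 0 0 0 * Real.cos (4 * θ) - H 0 0 0 1 * Real.sin (4 * θ))
        (H 0 0 0 0 * Real.sin (4 * θ) + H 0 0 0 1 * Real.cos (4 * θ))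
        (i.val + j.val + k.val + l.val) := by
  have h := harmVal_of_isHarmonic H hH
  generalize H 0 0 0 0 = a at *
  generalize H 0 0 0 1 = b at *
  rw [cos_four, sin_four]
  simp only [act, h, Fin.sum_univ_two]
  fin_cases i <;> fin_cases j <;> fin_cases k <;> fin_cases l <;>
    simp [harmVal, rot] <;> ring

/-- Rotating a 2D harmonic fourth-order tensor by an angle `θ` yields
a harmonic tensor whose determining components `(a, b)` transform by the rotation of
angle `4θ`. -/
theorem rotation_of_harmonic_tensor (H : Tens4) (hH : IsHarmonic H) (θ : ℝ) :
    IsHarmonic (act (rot θ) H) ∧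
      act (rot θ) H 0 0 0 0
        = H 0 0 0 0 * Real.cos (4 * θ) - H 0 0 0 1 * Real.sin (4 * θ) ∧
      act (rot θ) H 0 0 0 1
        = H 0 0 0 0 * Real.sin (4 * θ) + H 0 0 0 1 * Real.cos (4 * θ) := by
  have h := act_rot_harmVal H hH θ
  exact ⟨isHarmonic_of_harmVal _ _ _ h, by rw [h]; simp [harmVal], by rw [h]; simp [harmVal]⟩
end
end

section
/- Every 2D harmonic fourth-order tensor H is invariant under the rotation by π/2: if g = [[0, −1], [1, 0]], then Σₚqrs g i p · g j q · g k r · g l s · H p q r s = H i j k l for all indices i, j, k, l. (In particular, a nonzero 2D harmonic fourth-order tensor always has at least the symmetry group D₄ of the square.) -/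
open Finset

noncomputable section

/-- Every 2D harmonic fourth-order tensor is invariant under the
rotation by `π/2` (hence has at least the symmetry group `D₄` of the square). -/
theorem harmonic_invariant_under_quarter_turn (H : Tens4) (hH : IsHarmonic H) :
    ∀ i j k l,
      act (!![0, -1; 1, 0] : Matrix (Fin 2) (Fin 2) ℝ) H i j k l = H i j k l := by
  obtain ⟨hs, ht⟩ := hH
  have s01 : ∀ a b c d, H b a c d = H a b c d := fun a b c d => by
    have h0 : (Equiv.swap (0 : Fin 4) 1) 0 = 1 := by decide
    have h1 : (Equiv.swap (0 : Fin 4) 1) 1 = 0 := by decide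
    have h2 : (Equiv.swap (0 : Fin 4) 1) 2 = 2 := by decide
    have h3 : (Equiv.swap (0 : Fin 4) 1) 3 = 3 := by decide
    have h := hs (Equiv.swap 0 1) ![a, b, c, d]
    rw [h0, h1, h2, h3] at h
    exact h
  have s12 : ∀ a b c d, H a c b d = H a b c d := fun a b c d => by
    have h0 : (Equiv.swap (1 : Fin 4) 2) 0 = 0 := by decide
    have h1 : (Equiv.swap (1 : Fin 4) 2) 1 = 2 := by decide
    have h2 : (Equiv.swap (1 : Fin 4) 2) 2 = 1 := by decide
    have h3 : (Equiv.swap (1 : Fin 4) 2) 3 = 3 := by decide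
    have h := hs (Equiv.swap 1 2) ![a, b, c, d]
    rw [h0, h1, h2, h3] at h
    exact h
  have s23 : ∀ a b c d, H a b d c = H a b c d := fun a b c d => by
    have h0 : (Equiv.swap (2 : Fin 4) 3) 0 = 0 := by decide
    have h1 : (Equiv.swap (2 : Fin 4) 3) 1 = 1 := by decide
    have h2 : (Equiv.swap (2 : Fin 4) 3) 2 = 3 := by decide
    have h3 : (Equiv.swap (2 : Fin 4) 3) 3 = 2 := by decide
    have h := hs (Equiv.swap 2 3) ![a, b, c, d]
    rw [h0, h1, h2, h3] at h
    exact h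
  simp only [Fin.sum_univ_two] at ht
  -- the trace conditions
  have t00 := ht 0 0
  have t01 := ht 0 1
  have t11 := ht 1 1
  -- every component with a `1` before a `0` is sorted
  have r01 := s01 0 1
  have r12 := fun a d => s12 a 0 1 d
  have r23 := fun a b => s23 a b 0 1
  simp only [r01, r12, r23] at t00 t01 t11
  intro i j k l
  fin_cases i <;> fin_cases j <;> fin_cases k <;> fin_cases l <;>
    simp [act, Fin.sum_univ_two, r01, r12, r23] <;> linarith
end
end

section
/- Let C be an orthotropic 2D elasticity tensor with d'(C) ≠ 0. Then d'(C) is an eigentensor of the harmonic part H(C): for all i, j, Σₖₗ H(C) i j k l · d'(C) k l = (K₃(C)/I₂(C))·d'(C) i j, where I₂(C) = Σᵢⱼ (d'(C) i j)² and K₃(C) = Σᵢⱼₖₗ d(C) i j · H(C) i j k l · d(C) k l. -/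
open Finset

noncomputable section

/-- Invariant `I₂ = ‖d'(C)‖²`. -/
def I2 (C : Tens4) : ℝ := ∑ i, ∑ j, (devC C i j) ^ 2

/-- Invariant `J₂ = ‖H(C)‖²`. -/
def J2 (C : Tens4) : ℝ := ∑ i, ∑ j, ∑ k, ∑ l, (harmC C i j k l) ^ 2

/-- Invariant `K₃ = d(C) : H(C) : d(C)`. -/
def K3 (C : Tens4) : ℝ :=
  ∑ i, ∑ j, ∑ k, ∑ l, dil C i j * harmC C i j k l * dil C k l

theorem harm_real_aux (x y h k u v : ℝ) (huv : u ^ 2 + v ^ 2 = 1)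
    (h1 : x * v + y * u = 0) (h2 : h * (2 * u * v) + k * (u ^ 2 - v ^ 2) = 0) :
    k * (x ^ 2 - y ^ 2) = 2 * h * x * y := by
  have h4 : (u ^ 2 - v ^ 2) ^ 2 + (2 * u * v) ^ 2 = 1 := by
    linear_combination (u ^ 2 + v ^ 2 + 1) * huv
  obtain ⟨r, hr⟩ : ∃ r, r = x * u - y * v := ⟨_, rfl⟩
  obtain ⟨q, hq⟩ : ∃ q, q = h * (u ^ 2 - v ^ 2) - k * (2 * u * v) := ⟨_, rfl⟩
  have hx : x = r * u := by rw [hr]; linear_combination v * h1 - x * huv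
  have hy : y = - r * v := by rw [hr]; linear_combination u * h1 - y * huv
  have hh : h = q * (u ^ 2 - v ^ 2) := by
    rw [hq]; linear_combination (2 * u * v) * h2 - h * h4
  have hk : k = - q * (2 * u * v) := by
    rw [hq]; linear_combination (u ^ 2 - v ^ 2) * h2 - k * h4
  rw [hx, hy, hh, hk]; ring

set_option maxHeartbeats 4000000

/-- For an orthotropic 2D elasticity tensor `C` with `d'(C) ≠ 0`,
the deviator `d'(C)` is an eigentensor of the harmonic part `H(C)`, with eigenvalue
`K₃/I₂`. -/
theorem dev_is_eigentensor_of_harmonic_part (C : Tens4) (hC : IsElas C)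
    (horth : IsOrtho C) (hd : devC C ≠ 0) :
    ∀ i j, (∑ k, ∑ l, harmC C i j k l * devC C k l)
      = K3 C / I2 C * devC C i j := by
  obtain ⟨s1, s2, s3⟩ := hC
  obtain ⟨θ, o1, o2⟩ := horth
  obtain ⟨x, hx⟩ : ∃ x, x = (C 0 0 0 0 - C 1 1 1 1) / 2 := ⟨_, rfl⟩
  obtain ⟨y, hy⟩ : ∃ y, y = C 0 0 0 1 + C 0 1 1 1 := ⟨_, rfl⟩
  obtain ⟨t, ht⟩ : ∃ t, t = (C 0 0 0 0 + C 1 1 1 1) / 2 + C 0 0 1 1 := ⟨_, rfl⟩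
  obtain ⟨h, hh⟩ : ∃ h, h = (C 0 0 0 0 + C 1 1 1 1 - 2 * C 0 0 1 1 - 4 * C 0 1 0 1) / 8 :=
    ⟨_, rfl⟩
  obtain ⟨k, hk⟩ : ∃ k, k = (C 0 0 0 1 - C 0 1 1 1) / 2 := ⟨_, rfl⟩
  have e1 : C 0 0 1 0 = C 0 0 0 1 := s2 _ _ _ _
  have e2 : C 0 1 0 0 = C 0 0 0 1 := s3 _ _ _ _
  have e3 : C 1 0 0 0 = C 0 0 0 1 := by rw [s1, e2]
  have e4 : C 1 1 0 0 = C 0 0 1 1 := s3 _ _ _ _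
  have e5 : C 0 1 1 0 = C 0 1 0 1 := s2 _ _ _ _
  have e6 : C 1 0 0 1 = C 0 1 0 1 := s1 _ _ _ _
  have e7 : C 1 0 1 0 = C 0 1 0 1 := by rw [s1, e5]
  have e8 : C 1 0 1 1 = C 0 1 1 1 := s1 _ _ _ _
  have e9 : C 1 1 0 1 = C 0 1 1 1 := s3 _ _ _ _
  have e10 : C 1 1 1 0 = C 0 1 1 1 := by rw [s2, e9]
  have cs : Real.cos θ ^ 2 + Real.sin θ ^ 2 = 1 := Real.cos_sq_add_sin_sq θ
  simp only [act, rot, Fin.sum_univ_two, e1, e2, e3, e4, e5, e6, e7, e8, e9, e10,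
    Matrix.of_apply, Matrix.cons_val_zero, Matrix.cons_val_one, Matrix.cons_val_fin_one] at o1 o2
  have key : k * (x ^ 2 - y ^ 2) = 2 * h * x * y := by
    generalize Real.cos θ = c at *
    generalize Real.sin θ = s at *
    refine harm_real_aux x y h k (c ^ 2 - s ^ 2) (2 * c * s) ?_ ?_ ?_
    · linear_combination (c ^ 2 + s ^ 2 + 1) * cs
    · have : (x * (2 * c * s) + y * (c ^ 2 - s ^ 2)) * (c ^ 2 + s ^ 2) = 0 := by
        rw [hx, hy]; linear_combination o1 + o2
      rwa [cs, mul_one] at this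
    · rw [hh, hk]; linear_combination (o1 - o2) / 2
  have D00 : dil C 0 0 = t + x := by simp [dil, e4, hx, ht]; ring
  have D01 : dil C 0 1 = y := by simp [dil, e9, hy]
  have D10 : dil C 1 0 = y := by simp [dil, e1, e10, hy]
  have D11 : dil C 1 1 = t - x := by simp [dil, hx, ht]; ring
  have d00 : devC C 0 0 = x := by simp [devC, D00, D11, kdelta]
  have d01 : devC C 0 1 = y := by simp [devC, D01, kdelta]
  have d10 : devC C 1 0 = y := by simp [devC, D10, kdelta]
  have d11 : devC C 1 1 = -x := by simp [devC, D00, D11, kdelta]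
  have hM : muC C = (C 0 0 0 0 + C 1 1 1 1 - 2 * C 0 0 1 1 + 4 * C 0 1 0 1) / 8 := by
    simp [muC, voigt, D00, D11, e7, ht]; ring
  have hK : kappaC C = t / 2 := by simp [kappaC, D00, D11]; ring
  have H : ∀ i j k' l, harmC C i j k' l =
      if i = j then (if k' = l then (if i = k' then h else -h) else (if i = 0 then k else -k))
      else (if k' = l then (if k' = 0 then k else -k) else -h) := by
    intro i j k' l
    fin_cases i <;> fin_cases j <;> fin_cases k' <;> fin_cases l <;>
      simp [harmC, Jten, kdelta, hM, hK, d00, d01, d10, d11,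
        e1, e2, e3, e4, e5, e6, e7, e8, e9, e10] <;>
      simp only [hx, hy, ht, hh, hk] <;> ring
  have hI : I2 C = 2 * (x ^ 2 + y ^ 2) := by
    simp [I2, d00, d01, d10, d11]; ring
  have hK3 : K3 C = 4 * (h * (x ^ 2 - y ^ 2) + 2 * k * x * y) := by
    simp [K3, D00, D01, D10, D11, H]; ring
  have hpos : x ^ 2 + y ^ 2 ≠ 0 := by
    intro h0
    have hx0 : x = 0 := pow_eq_zero_iff two_ne_zero |>.mp (by linarith [sq_nonneg x, sq_nonneg y])
    have hy0 : y = 0 := pow_eq_zero_iff two_ne_zero |>.mp (by linarith [sq_nonneg x, sq_nonneg y])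
    apply hd
    funext i j
    fin_cases i <;> fin_cases j <;> simp [d00, d01, d10, d11, hx0, hy0]
  clear hx hy ht hh hk
  intro i j
  rw [hI, hK3]
  fin_cases i <;> fin_cases j <;> simp [H, d00, d01, d10, d11] <;> field_simp
  · linear_combination (-4) * y * key
  · linear_combination 4 * x * key
  · linear_combination 4 * x * key
  · linear_combination 4 * y * key
end
end

section
/- (Reconstruction of orthotropic 2D elasticity tensors.) Let C be an orthotropic 2D elasticity tensor with d'(C) ≠ 0, and set I₂ = Σᵢⱼ (d'(C) i j)² and K₃ = Σᵢⱼₖₗ d(C) i j · H(C) i j k l · d(C) k l. Then C is reconstructed from its invariants μ(C), κ(C), I₂, K₃ and its second-order covariant d'(C) by the formula C i j k l = 2μ(C)·J i j k l + κ(C)·δ i j · δ k l + ½(δ i j · d'(C) k l + d'(C) i j · δ k l) + (2K₃/I₂²)·(d'(C) i j · d'(C) k l − ½·I₂·J i j k l) for all indices i, j, k, l. -/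
open Finset

noncomputable section

set_option linter.unusedSimpArgs false
set_option maxHeartbeats 2000000

/-- Core alignment fact: the angle-doubled deviator is collinear to the harmonic part. -/
theorem align_aux (x y h1 h2 c s : ℝ) (hcs : c ^ 2 + s ^ 2 = 1)
    (e1 : x * (2 * s * c) + y * (c ^ 2 - s ^ 2) = 0)
    (e2 : h1 * (2 * (2 * s * c) * (c ^ 2 - s ^ 2))
      + h2 * ((c ^ 2 - s ^ 2) ^ 2 - (2 * s * c) ^ 2) = 0) :
    h2 * (x ^ 2 - y ^ 2) = h1 * (2 * x * y) := by
  obtain ⟨S, hS⟩ : ∃ S, S = 2 * s * c := ⟨_, rfl⟩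
  obtain ⟨K, hK⟩ : ∃ K, K = c ^ 2 - s ^ 2 := ⟨_, rfl⟩
  have hKS : K ^ 2 + S ^ 2 = 1 := by
    have : K ^ 2 + S ^ 2 = (c ^ 2 + s ^ 2) ^ 2 := by rw [hS, hK]; ring
    rw [this, hcs]; norm_num
  rw [← hS, ← hK] at e1 e2
  have hx : x = (x * K - y * S) * K := by linear_combination S * e1 - x * hKS
  have hy : y = -(x * K - y * S) * S := by linear_combination K * e1 - y * hKS
  obtain ⟨t, ht⟩ : ∃ t, t = x * K - y * S := ⟨_, rfl⟩
  rw [← ht] at hx hy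
  rw [hx, hy]
  linear_combination t ^ 2 * e2

/-- Reconstruction of an orthotropic 2D elasticity tensor from its
invariants `μ, κ, I₂, K₃` and its second-order covariant `d'(C)`. -/
theorem orthotropic_reconstruction (C : Tens4) (hC : IsElas C)
    (horth : IsOrtho C) (hd : devC C ≠ 0) :
    ∀ i j k l, C i j k l =
      2 * muC C * Jten i j k l + kappaC C * kdelta i j * kdelta k l
        + (kdelta i j * devC C k l + devC C i j * kdelta k l) / 2
        + 2 * K3 C / (I2 C) ^ 2
          * (devC C i j * devC C k l - I2 C / 2 * Jten i j k l) := by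
  obtain ⟨m1, m2, m3⟩ := hC
  obtain ⟨θ, o1, o2⟩ := horth
  have hcs := Real.cos_sq_add_sin_sq θ
  have s1 : C 0 0 1 0 = C 0 0 0 1 := m2 _ _ _ _
  have s2 : C 0 1 0 0 = C 0 0 0 1 := m3 _ _ _ _
  have s3 : C 1 0 0 0 = C 0 0 0 1 := by rw [m1, s2]
  have s4 : C 1 1 0 0 = C 0 0 1 1 := m3 _ _ _ _
  have s5 : C 1 0 0 1 = C 0 1 0 1 := m1 _ _ _ _
  have s6 : C 0 1 1 0 = C 0 1 0 1 := m2 _ _ _ _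
  have s7 : C 1 0 1 0 = C 0 1 0 1 := by rw [m1, s6]
  have s8 : C 1 0 1 1 = C 0 1 1 1 := m1 _ _ _ _
  have s9 : C 1 1 0 1 = C 0 1 1 1 := m3 _ _ _ _
  have s10 : C 1 1 1 0 = C 0 1 1 1 := by rw [m2, s9]
  simp [act, rot, Fin.sum_univ_two, s1, s2, s3, s4, s5, s6, s7, s8, s9, s10] at o1 o2
  obtain ⟨c, hc⟩ : ∃ c, c = Real.cos θ := ⟨_, rfl⟩
  obtain ⟨s, hs⟩ : ∃ s, s = Real.sin θ := ⟨_, rfl⟩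
  rw [← hc, ← hs] at hcs o1 o2
  obtain ⟨x, hx⟩ : ∃ x, x = (C 0 0 0 0 - C 1 1 1 1) / 2 := ⟨_, rfl⟩
  obtain ⟨y, hy⟩ : ∃ y, y = C 0 0 0 1 + C 0 1 1 1 := ⟨_, rfl⟩
  obtain ⟨h2, hh2⟩ : ∃ h, h = (C 0 0 0 1 - C 0 1 1 1) / 2 := ⟨_, rfl⟩
  obtain ⟨κ, hκ⟩ : ∃ k, k = (C 0 0 0 0 + 2 * C 0 0 1 1 + C 1 1 1 1) / 4 := ⟨_, rfl⟩
  obtain ⟨μ, hμ⟩ : ∃ k, k = (C 0 0 0 0 + 4 * C 0 1 0 1 - 2 * C 0 0 1 1 + C 1 1 1 1) / 8 :=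
    ⟨_, rfl⟩
  obtain ⟨h1, hh1⟩ : ∃ h, h = μ - C 0 1 0 1 := ⟨_, rfl⟩
  have a1 : C 0 0 0 0 = μ + κ + x + h1 := by linarith
  have a2 : C 1 1 1 1 = μ + κ - x + h1 := by linarith
  have a3 : C 0 0 1 1 = κ - μ - h1 := by linarith
  have a4 : C 0 1 0 1 = μ - h1 := by linarith
  have a5 : C 0 0 0 1 = y / 2 + h2 := by linarith
  have a6 : C 0 1 1 1 = y / 2 - h2 := by linarith
  clear hx hy hh2 hκ hμ hh1 m1 m2 m3
  have key : h2 * (x ^ 2 - y ^ 2) = h1 * (2 * x * y) := by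
    rw [a1, a2, a3, a4, a5, a6] at o1 o2
    apply align_aux x y h1 h2 c s hcs
    · have : (c ^ 2 + s ^ 2) * (x * (2 * s * c) + y * (c ^ 2 - s ^ 2)) = 0 := by
        linear_combination o1 + o2
      rwa [hcs, one_mul] at this
    · linear_combination (o1 - o2) / 2
  clear o1 o2 hcs
  have d00 : devC C 0 0 = x := by
    simp [devC, dil, kdelta, Fin.sum_univ_two, s1, s2, s3, s4, s5, s6, s7, s8, s9, s10]
    linarith
  have d11 : devC C 1 1 = -x := by
    simp [devC, dil, kdelta, Fin.sum_univ_two, s1, s2, s3, s4, s5, s6, s7, s8, s9, s10]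
    linarith
  have d01 : devC C 0 1 = y := by
    simp [devC, dil, kdelta, Fin.sum_univ_two, s1, s2, s3, s4, s5, s6, s7, s8, s9, s10]
    linarith
  have d10 : devC C 1 0 = y := by
    simp [devC, dil, kdelta, Fin.sum_univ_two, s1, s2, s3, s4, s5, s6, s7, s8, s9, s10]
    linarith
  have hmu : muC C = μ := by
    simp [muC, voigt, dil, Fin.sum_univ_two, s1, s2, s3, s4, s5, s6, s7, s8, s9, s10]
    linarith
  have hka : kappaC C = κ := by
    simp [kappaC, dil, Fin.sum_univ_two, s1, s2, s3, s4, s5, s6, s7, s8, s9, s10]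
    linarith
  have hI : I2 C = 2 * (x ^ 2 + y ^ 2) := by
    simp [I2, Fin.sum_univ_two, d00, d11, d01, d10]; ring
  have hK : K3 C = 4 * (h1 * (x ^ 2 - y ^ 2) + h2 * (2 * x * y)) := by
    simp [K3, harmC, Jten, kdelta, dil, Fin.sum_univ_two, d00, d11, d01, d10, hmu, hka,
      s1, s2, s3, s4, s5, s6, s7, s8, s9, s10, a1, a2, a3, a4, a5, a6]
    ring
  have hne : x ^ 2 + y ^ 2 ≠ 0 := by
    intro h
    have x0 : x = 0 := pow_eq_zero_iff two_ne_zero |>.mp (by linarith only [h, sq_nonneg x, sq_nonneg y])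
    have y0 : y = 0 := pow_eq_zero_iff two_ne_zero |>.mp (by linarith only [h, sq_nonneg x, sq_nonneg y])
    apply hd
    funext i j
    fin_cases i <;> fin_cases j <;> simp [d00, d11, d01, d10, x0, y0]
  obtain ⟨q, hq⟩ : ∃ q, q = 2 * K3 C / (I2 C) ^ 2 := ⟨_, rfl⟩
  have q1 : q * (x ^ 2 - y ^ 2) = 2 * h1 := by
    rw [hq, hK, hI]; field_simp
    linear_combination (8 * x * y) * key
  have q2 : q * (x * y) = h2 := by
    rw [hq, hK, hI]; field_simp
    linear_combination (-2 * (x ^ 2 - y ^ 2)) * key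
  rw [← hq, hmu, hka, hI]
  intro i j k l
  fin_cases i <;> fin_cases j <;> fin_cases k <;> fin_cases l <;>
    simp [Jten, kdelta, d00, d11, d01, d10,
      s1, s2, s3, s4, s5, s6, s7, s8, s9, s10, a1, a2, a3, a4, a5, a6] <;>
    linarith only [q1, q2]
end
end

section
/- Let C be a 2D elasticity tensor with d'(C) ≠ 0, and set I₂ = Σᵢⱼ (d'(C) i j)², J₂ = Σᵢⱼₖₗ (H(C) i j k l)², and K₃ = Σᵢⱼₖₗ d(C) i j · H(C) i j k l · d(C) k l. Then the distance from C to its orthotropic reconstruction satisfies the exact formula Σᵢⱼₖₗ (H(C) i j k l − (2K₃/I₂²)·(d'(C) i j · d'(C) k l − ½·I₂·J i j k l))² = (J₂·I₂² − 2K₃²)/I₂²; equivalently, the norm of H(C) − (2K₃/I₂²)·d'∗d' equals √(J₂·I₂² − 2K₃²)/I₂. -/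
open Finset

noncomputable section

/-- The harmonic part has only two independent components. -/
theorem harm_components (C : Tens4) (hC : IsElas C) :
    ∃ a b : ℝ, ∀ i j k l : Fin 2, harmC C i j k l =
      if i.val + j.val + k.val + l.val = 0 then a
      else if i.val + j.val + k.val + l.val = 1 then b
      else if i.val + j.val + k.val + l.val = 2 then -a
      else if i.val + j.val + k.val + l.val = 3 then -b else a := by
  obtain ⟨h1, h2, h3⟩ := hC
  have e1 := h1 1 0 0 0
  have e2 := h1 1 0 0 1
  have e3 := h1 1 0 1 0
  have e4 := h1 1 0 1 1
  have f1 := h2 0 0 1 0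
  have f2 := h2 0 1 1 0
  have f4 := h2 1 1 1 0
  have g1 := h3 0 1 0 0
  have g2 := h3 1 1 0 0
  have g3 := h3 1 1 0 1
  refine ⟨harmC C 0 0 0 0, harmC C 0 0 0 1, ?_⟩
  intro i j k l
  fin_cases i <;> fin_cases j <;> fin_cases k <;> fin_cases l <;>
    simp [harmC, Jten, devC, muC, kappaC, dil, voigt, kdelta, Fin.sum_univ_two] <;> linarith

/-- The deviator is symmetric and traceless. -/
theorem dev_components (C : Tens4) (hC : IsElas C) :
    ∃ p q t : ℝ, devC C 0 0 = p ∧ devC C 0 1 = q ∧ devC C 1 0 = q ∧ devC C 1 1 = -p ∧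
      dil C 0 0 = p + t ∧ dil C 0 1 = q ∧ dil C 1 0 = q ∧ dil C 1 1 = -p + t := by
  obtain ⟨h1, h2, h3⟩ := hC
  have f1 := h2 0 0 1 0
  have f4 := h2 1 1 1 0
  refine ⟨devC C 0 0, devC C 0 1, (dil C 0 0 + dil C 1 1) / 2, ?_⟩
  simp only [devC, dil, kdelta, Fin.sum_univ_two]
  refine ⟨?_, ?_, ?_, ?_, ?_, ?_, ?_, ?_⟩ <;> simp <;> linarith

/-- Exact formula for the squared distance from `C` to its
orthotropic reconstruction:
`‖H(C) − (2K₃/I₂²) d'∗d'‖² = (J₂ I₂² − 2K₃²)/I₂²`, and the corresponding norm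
equals `√(J₂ I₂² − 2K₃²)/I₂`. -/
theorem distance_to_orthotropic_reconstruction_formula (C : Tens4) (hC : IsElas C)
    (hd : devC C ≠ 0) :
    (∑ i, ∑ j, ∑ k, ∑ l,
        (harmC C i j k l - 2 * K3 C / (I2 C) ^ 2
          * (devC C i j * devC C k l - I2 C / 2 * Jten i j k l)) ^ 2)
      = (J2 C * (I2 C) ^ 2 - 2 * (K3 C) ^ 2) / (I2 C) ^ 2 ∧
    Real.sqrt (∑ i, ∑ j, ∑ k, ∑ l,
        (harmC C i j k l - 2 * K3 C / (I2 C) ^ 2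
          * (devC C i j * devC C k l - I2 C / 2 * Jten i j k l)) ^ 2)
      = Real.sqrt (J2 C * (I2 C) ^ 2 - 2 * (K3 C) ^ 2) / I2 C := by
  have hI : 0 < I2 C := by
    have h0 : 0 ≤ I2 C := by unfold I2; positivity
    refine lt_of_le_of_ne h0 (fun h => hd ?_)
    have h' : I2 C = 0 := h.symm
    simp only [I2, Fin.sum_univ_two] at h'
    funext i j
    apply pow_eq_zero_iff (two_ne_zero) |>.mp
    fin_cases i <;> fin_cases j <;> simp <;>
      nlinarith [sq_nonneg (devC C 0 0), sq_nonneg (devC C 0 1), sq_nonneg (devC C 1 0),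
        sq_nonneg (devC C 1 1)]
  have main : (∑ i, ∑ j, ∑ k, ∑ l,
        (harmC C i j k l - 2 * K3 C / (I2 C) ^ 2
          * (devC C i j * devC C k l - I2 C / 2 * Jten i j k l)) ^ 2)
      = (J2 C * (I2 C) ^ 2 - 2 * (K3 C) ^ 2) / (I2 C) ^ 2 := by
    obtain ⟨a, b, hH⟩ := harm_components C hC
    obtain ⟨p, q, t, d1, d2, d3, d4, d5, d6, d7, d8⟩ := dev_components C hC
    have eI : I2 C = 2 * (p ^ 2 + q ^ 2) := by
      simp only [I2, Fin.sum_univ_two, d1, d2, d3, d4]; ring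
    have eJ : J2 C = 8 * (a ^ 2 + b ^ 2) := by
      simp [J2, Fin.sum_univ_two, hH]; ring
    have eK : K3 C = 4 * (a * (p ^ 2 - q ^ 2) + 2 * b * p * q) := by
      simp [K3, Fin.sum_univ_two, hH, d5, d6, d7, d8]; ring
    have expand : ∀ s : ℝ, (∑ i, ∑ j, ∑ k, ∑ l,
        (harmC C i j k l - s
          * (devC C i j * devC C k l - I2 C / 2 * Jten i j k l)) ^ 2)
        = J2 C - 2 * s * K3 C + s ^ 2 * (I2 C) ^ 2 / 2 := by
      intro s
      rw [eJ, eK, eI]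
      simp [Fin.sum_univ_two, hH, d1, d2, d3, d4, Jten, kdelta]; ring
    rw [expand]
    have := hI.ne'
    field_simp
    ring
  refine ⟨main, ?_⟩
  rw [main, Real.sqrt_div' _ (sq_nonneg _), Real.sqrt_sq hI.le]
end
end

section
/- (Upper bound of the distance to the orthotropic symmetry class.) Let C be a 2D elasticity tensor with d'(C) ≠ 0, set I₂ = Σᵢⱼ (d'(C) i j)², J₂ = Σᵢⱼₖₗ (H(C) i j k l)², K₃ = Σᵢⱼₖₗ d(C) i j · H(C) i j k l · d(C) k l, and define C₀ i j k l = 2μ(C)·J i j k l + κ(C)·δ i j · δ k l + ½(δ i j · d'(C) k l + d'(C) i j · δ k l) + (2K₃/I₂²)·(d'(C) i j · d'(C) k l − ½·I₂·J i j k l). Then C₀ is an orthotropic 2D elasticity tensor and Σᵢⱼₖₗ (C i j k l − C₀ i j k l)² = (J₂·I₂² − 2K₃²)/I₂². Consequently the distance from C to the set of orthotropic 2D elasticity tensors (in the norm whose square is the sum of squared components) is at most Δ = √(J₂·I₂² − 2K₃²)/I₂. -/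
open Finset

noncomputable section

theorem exists_rot_diag (a b : ℝ) :
    ∃ θ : ℝ, 2 * a * Real.cos θ * Real.sin θ
      + b * (Real.cos θ ^ 2 - Real.sin θ ^ 2) = 0 := by
  refine ⟨-(Complex.arg ⟨a, b⟩) / 2, ?_⟩
  set z : ℂ := ⟨a, b⟩ with hz
  have h1 : ‖z‖ * Real.cos z.arg = a := Complex.norm_mul_cos_arg z
  have h2 : ‖z‖ * Real.sin z.arg = b := Complex.norm_mul_sin_arg z
  have h3 : Real.cos z.arg = Real.cos (-z.arg / 2) ^ 2 - Real.sin (-z.arg / 2) ^ 2 := by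
    rw [← Real.cos_two_mul', ← Real.cos_neg]; congr 1; ring
  have h4 : Real.sin z.arg = -(2 * Real.sin (-z.arg / 2) * Real.cos (-z.arg / 2)) := by
    rw [← Real.sin_two_mul, ← Real.sin_neg]; congr 1; ring
  rw [h3] at h1
  rw [h4] at h2
  rw [← h1, ← h2]
  ring

theorem ortho_model (m k e f : ℝ) (D : Fin 2 → Fin 2 → ℝ) (h10 : D 1 0 = D 0 1)
    (h11 : D 1 1 = -D 0 0) :
    IsOrtho (fun i j k' l => 2 * m * Jten i j k' l + k * kdelta i j * kdelta k' l
        + (kdelta i j * D k' l + D i j * kdelta k' l) / 2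
        + e * (D i j * D k' l - f * Jten i j k' l)) := by
  obtain ⟨θ, hθ⟩ := exists_rot_diag (D 0 0) (D 0 1)
  generalize hc : Real.cos θ = c at hθ
  generalize hs : Real.sin θ = s at hθ
  refine ⟨θ, ?_, ?_⟩
  · simp [act, rot, Fin.sum_univ_two, Jten, kdelta, h10, h11, hc, hs]
    linear_combination ((c ^ 2 + s ^ 2) / 2
      + e * (D 0 0 * (c ^ 2 - s ^ 2) - 2 * D 0 1 * s * c)) * hθ
  · simp [act, rot, Fin.sum_univ_two, Jten, kdelta, h10, h11, hc, hs]
    linear_combination ((c ^ 2 + s ^ 2) / 2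
      - e * (D 0 0 * (c ^ 2 - s ^ 2) - 2 * D 0 1 * s * c)) * hθ

theorem devC_symm (C : Tens4) (hC : IsElas C) (i j : Fin 2) : devC C i j = devC C j i := by
  have h : dil C i j = dil C j i := by
    unfold dil; exact Finset.sum_congr rfl fun k _ => hC.2.1 k k i j
  have h' : kdelta i j = kdelta j i := by simp [kdelta, eq_comm]
  unfold devC; rw [h, h']

theorem devC_11 (C : Tens4) : devC C 1 1 = -devC C 0 0 := by
  simp [devC, kdelta, Fin.sum_univ_two]; ring

theorem I2_eq (C : Tens4) (hC : IsElas C) :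
    I2 C = 2 * (devC C 0 0 ^ 2 + devC C 0 1 ^ 2) := by
  simp only [I2, Fin.sum_univ_two, devC_symm C hC 1 0, devC_11]; ring

theorem I2_pos (C : Tens4) (hC : IsElas C) (hd : devC C ≠ 0) : 0 < I2 C := by
  by_contra hn
  rw [I2_eq C hC] at hn
  have h0 : devC C 0 0 = 0 := by nlinarith [sq_nonneg (devC C 0 0), sq_nonneg (devC C 0 1)]
  have h1 : devC C 0 1 = 0 := by nlinarith [sq_nonneg (devC C 0 0), sq_nonneg (devC C 0 1)]
  apply hd
  funext i j
  fin_cases i <;> fin_cases j <;> simp [h0, h1, devC_symm C hC 1 0, devC_11]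

/-- The components of the harmonic part are governed by `H 0000` and `H 0001`. -/
theorem harmC_comp (C : Tens4) (hC : IsElas C) : ∃ h m : ℝ,
    harmC C 0 0 0 0 = h ∧ harmC C 0 0 0 1 = m ∧ harmC C 0 0 1 0 = m ∧ harmC C 0 0 1 1 = -h ∧
    harmC C 0 1 0 0 = m ∧ harmC C 0 1 0 1 = -h ∧ harmC C 0 1 1 0 = -h ∧ harmC C 0 1 1 1 = -m ∧
    harmC C 1 0 0 0 = m ∧ harmC C 1 0 0 1 = -h ∧ harmC C 1 0 1 0 = -h ∧ harmC C 1 0 1 1 = -m ∧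
    harmC C 1 1 0 0 = -h ∧ harmC C 1 1 0 1 = -m ∧ harmC C 1 1 1 0 = -m ∧
    harmC C 1 1 1 1 = h := by
  obtain ⟨s1, s2, s3⟩ := hC
  have e1 := s2 0 0 1 0
  have e2 := s3 0 1 0 0
  have e3 := s1 1 0 0 0
  have e4 := s3 1 1 0 0
  have e5 := s1 1 0 0 1
  have e6 := s2 0 1 1 0
  have e7 := s1 1 0 1 0
  have e8 := s1 1 0 1 1
  have e9 := s3 1 1 0 1
  have e10 := s2 1 1 1 0
  refine ⟨_, _, rfl, rfl, ?_⟩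
  refine ⟨?_, ?_, ?_, ?_, ?_, ?_, ?_, ?_, ?_, ?_, ?_, ?_, ?_, ?_⟩ <;>
    simp [harmC, devC, muC, kappaC, voigt, dil, Jten, kdelta, Fin.sum_univ_two] <;> linarith

theorem dil_eq (C : Tens4) (i j : Fin 2) :
    dil C i j = devC C i j + (∑ k, dil C k k) / 2 * kdelta i j := by
  unfold devC; ring

theorem K3_eq (C : Tens4) (hC : IsElas C) : K3 C =
    4 * ((devC C 0 0 ^ 2 - devC C 0 1 ^ 2) * harmC C 0 0 0 0
      + 2 * devC C 0 0 * devC C 0 1 * harmC C 0 0 0 1) := by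
  obtain ⟨h, m, q1, q2, q3, q4, q5, q6, q7, q8, q9, q10, q11, q12, q13, q14, q15, q16⟩ :=
    harmC_comp C hC
  unfold K3
  obtain ⟨t, ht⟩ : ∃ t : ℝ, ∀ i j, dil C i j = devC C i j + t * kdelta i j := ⟨_, dil_eq C⟩
  simp only [ht]
  simp [Fin.sum_univ_two, q1, q2, q3, q4, q5, q6, q7, q8, q9, q10, q11, q12, q13, q14, q15, q16,
    devC_symm C hC 1 0, devC_11, kdelta]
  ring

theorem dist_eq (C : Tens4) (hC : IsElas C) (e : ℝ) :
    (∑ i, ∑ j, ∑ k, ∑ l, (harmC C i j k l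
      - e * (devC C i j * devC C k l - I2 C / 2 * Jten i j k l)) ^ 2)
      = J2 C - 2 * e * K3 C + e ^ 2 * (I2 C) ^ 2 / 2 := by
  rw [K3_eq C hC, I2_eq C hC]
  obtain ⟨h, m, q1, q2, q3, q4, q5, q6, q7, q8, q9, q10, q11, q12, q13, q14, q15, q16⟩ :=
    harmC_comp C hC
  simp [J2, Fin.sum_univ_two, q1, q2, q3, q4, q5, q6, q7, q8, q9, q10, q11, q12, q13, q14, q15,
    q16, devC_symm C hC 1 0, devC_11, kdelta, Jten]
  ring

/-- The orthotropic reconstruction `C₀` of a 2D elasticity tensor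
`C` (with `d'(C) ≠ 0`) is an orthotropic elasticity tensor at squared distance
`(J₂ I₂² − 2K₃²)/I₂²` from `C`; hence the distance from `C` to the orthotropic
symmetry class is at most `Δ = √(J₂ I₂² − 2K₃²)/I₂`. -/
theorem upper_bound_distance_to_orthotropy (C : Tens4) (hC : IsElas C)
    (hd : devC C ≠ 0) :
    let C₀ : Tens4 := fun i j k l =>
      2 * muC C * Jten i j k l + kappaC C * kdelta i j * kdelta k l
        + (kdelta i j * devC C k l + devC C i j * kdelta k l) / 2
        + 2 * K3 C / (I2 C) ^ 2
          * (devC C i j * devC C k l - I2 C / 2 * Jten i j k l)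
    IsElas C₀ ∧ IsOrtho C₀ ∧
      (∑ i, ∑ j, ∑ k, ∑ l, (C i j k l - C₀ i j k l) ^ 2)
        = (J2 C * (I2 C) ^ 2 - 2 * (K3 C) ^ 2) / (I2 C) ^ 2 ∧
      sInf {r : ℝ | ∃ Q : Tens4, IsElas Q ∧ IsOrtho Q ∧
          r = Real.sqrt (∑ i, ∑ j, ∑ k, ∑ l, (C i j k l - Q i j k l) ^ 2)}
        ≤ Real.sqrt (J2 C * (I2 C) ^ 2 - 2 * (K3 C) ^ 2) / I2 C := by
  intro C₀
  have hI := I2_pos C hC hd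
  have hE : IsElas C₀ := by
    have hk : ∀ i j, kdelta i j = kdelta j i := fun i j => by simp [kdelta, eq_comm]
    refine ⟨fun i j k l => ?_, fun i j k l => ?_, fun i j k l => ?_⟩
    · simp only [C₀, Jten]
      rw [devC_symm C hC i j, hk i j]; ring
    · simp only [C₀, Jten]
      rw [devC_symm C hC k l, hk k l]; ring
    · simp only [C₀, Jten]
      rw [hk i k, hk j l, hk i l, hk j k]; ring
  have hO : IsOrtho C₀ :=
    ortho_model (muC C) (kappaC C) (2 * K3 C / (I2 C) ^ 2) (I2 C / 2) (devC C)
      (devC_symm C hC 1 0) (devC_11 C)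
  have hD : (∑ i, ∑ j, ∑ k, ∑ l, (C i j k l - C₀ i j k l) ^ 2)
        = (J2 C * (I2 C) ^ 2 - 2 * (K3 C) ^ 2) / (I2 C) ^ 2 := by
    have h := dist_eq C hC (2 * K3 C / (I2 C) ^ 2)
    have h2 : ∀ i j k l, C i j k l - C₀ i j k l = harmC C i j k l
        - 2 * K3 C / (I2 C) ^ 2 * (devC C i j * devC C k l - I2 C / 2 * Jten i j k l) := by
      intro i j k l
      simp only [C₀, harmC]; ring
    simp only [h2]
    rw [h]
    field_simp
    ring
  refine ⟨hE, hO, hD, ?_⟩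
  refine csInf_le ⟨0, ?_⟩ ⟨C₀, hE, hO, ?_⟩
  · rintro r ⟨Q, -, -, rfl⟩
    exact Real.sqrt_nonneg _
  · rw [hD, Real.sqrt_div' _ (sq_nonneg _), Real.sqrt_sq hI.le]
end
end

section
/- For every 2D elasticity tensor C, the invariants I₂ = Σᵢⱼ (d'(C) i j)², J₂ = Σᵢⱼₖₗ (H(C) i j k l)², and K₃ = Σᵢⱼₖₗ d(C) i j · H(C) i j k l · d(C) k l satisfy the inequality 2·K₃² ≤ J₂·I₂². (This makes the quantity √(J₂·I₂² − 2K₃²)/I₂ a well-defined real number whenever d'(C) ≠ 0.) -/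
open Finset

noncomputable section

theorem aux_h (C : Tens4) (hC : IsElas C) :
    ∃ h g p q : ℝ, I2 C = 2 * (p ^ 2 + q ^ 2) ∧ J2 C = 8 * (h ^ 2 + g ^ 2) ∧
      K3 C = 4 * h * (p ^ 2 - q ^ 2) + 8 * g * p * q := by
  obtain ⟨h1, h2, h3⟩ := hC
  have e1 : C 1 0 0 0 = C 0 1 0 0 := h1 _ _ _ _
  have e2 : C 0 0 0 1 = C 0 1 0 0 := h3 _ _ _ _
  have e3 : C 0 0 1 0 = C 0 1 0 0 := (h2 _ _ _ _).trans e2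
  have e4 : C 1 0 1 1 = C 0 1 1 1 := h1 _ _ _ _
  have e5 : C 1 1 0 1 = C 0 1 1 1 := h3 _ _ _ _
  have e6 : C 1 1 1 0 = C 0 1 1 1 := (h2 _ _ _ _).trans e5
  have e7 : C 1 1 0 0 = C 0 0 1 1 := h3 _ _ _ _
  have e8 : C 1 0 0 1 = C 0 1 0 1 := h1 _ _ _ _
  have e9 : C 0 1 1 0 = C 0 1 0 1 := h2 _ _ _ _
  have e10 : C 1 0 1 0 = C 0 1 0 1 := (h1 _ _ _ _).trans e9
  refine ⟨(C 0 0 0 0 + C 1 1 1 1 - 2 * C 0 0 1 1 - 4 * C 0 1 0 1) / 8,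
    (C 0 1 0 0 - C 0 1 1 1) / 2, (C 0 0 0 0 - C 1 1 1 1) / 2,
    C 0 1 0 0 + C 0 1 1 1, ?_, ?_, ?_⟩ <;>
  · simp [I2, J2, K3, harmC, devC, dil, muC, kappaC, voigt, Jten, kdelta, Fin.sum_univ_two,
      e1, e2, e3, e4, e5, e6, e7, e8, e9, e10]
    ring

/-- For every 2D elasticity tensor, `2K₃² ≤ J₂ I₂²`. -/
theorem invariants_inequality (C : Tens4) (hC : IsElas C) :
    2 * (K3 C) ^ 2 ≤ J2 C * (I2 C) ^ 2 := by
  obtain ⟨h, g, p, q, hI, hJ, hK⟩ := aux_h C hC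
  rw [hI, hJ, hK]
  nlinarith [sq_nonneg (g * (p ^ 2 - q ^ 2) - 2 * h * p * q)]
end
end
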